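/- arXiv:math/0109147 — 2 statements merged into one kernel-verified Lean document; each statement's English description precedes it below -/
import Mathlib

section
/- The quotient ring R_n = ℚ[x₁,...,x_n]/J_n, where J_n is the ideal generated by all non-constant quasi-symmetric polynomials in n variables, is a finite-dimensional ℚ-vector space of dimension at most the Catalan number C_n = (1/(n+1))·binom(2n,n). Moreover it is spanned by the images of the monomials x₁^{a₁}⋯x_n^{a_n} satisfying a₁+⋯+a_j < j for all j ∈ {1,...,n}. -/
open scoped Classical

/-- The monomial quasi-symmetric polynomial in `n` variables of a composition
`α = [α₁,…,α_k]` (list of positive parts):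
`M_α(x₁,…,x_n) = Σ_{i₁<⋯<i_k ≤ n} x_{i₁}^{α₁}⋯x_{i_k}^{α_k}`. -/
noncomputable def Mpoly (n : ℕ) (l : List ℕ) : MvPolynomial (Fin n) ℚ :=
  ∑ i : Fin l.length → Fin n,
    if StrictMono i then ∏ a : Fin l.length, MvPolynomial.X (i a) ^ l.get a else 0

/-- The ideal `J_n` of `ℚ[x₁,…,x_n]` generated by the non-constant quasi-symmetric
polynomials, i.e. generated by the `M_α` for nonempty compositions `α`. -/
noncomputable def Jn (n : ℕ) : Ideal (MvPolynomial (Fin n) ℚ) :=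
  Ideal.span {P | ∃ l : List ℕ, l ≠ [] ∧ (∀ x ∈ l, 0 < x) ∧ P = Mpoly n l}


namespace QS
open MvPolynomial

/-- recursive version of the monomial quasi-symmetric polynomials in variables `≥ p` -/
noncomputable def Mr (n : ℕ) : ℕ → List ℕ → MvPolynomial (Fin n) ℚ
  | _, [] => 1
  | p, (a :: l) => ∑ i : Fin n, if p ≤ (i : ℕ) then X i ^ a * Mr n ((i : ℕ) + 1) l else 0

lemma Mge_eq (n : ℕ) (l : List ℕ) : ∀ p : ℕ,
    (∑ i : Fin l.length → Fin n, if StrictMono i ∧ (∀ a, p ≤ (i a : ℕ)) then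
      ∏ a : Fin l.length, (X (i a) : MvPolynomial (Fin n) ℚ) ^ l.get a else 0) = Mr n p l := by
  induction l with
  | nil =>
    intro p
    have h : ∀ i : Fin ([] : List ℕ).length → Fin n,
        (StrictMono i ∧ (∀ a, p ≤ (i a : ℕ))) := by
      intro i
      exact ⟨fun a => a.elim0, fun a => a.elim0⟩
    simp only [h, Mr]
    simp
  | cons b l ih =>
    intro p
    rw [Mr]
    have e := (Fin.consEquiv (n := l.length) (fun _ : Fin (l.length + 1) => Fin n)).sum_comp
      (fun i : Fin (l.length + 1) → Fin n => if StrictMono i ∧ (∀ a, p ≤ (i a : ℕ)) then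
      ∏ a : Fin (l.length + 1), (X (i a) : MvPolynomial (Fin n) ℚ) ^ (b :: l).get a else 0)
    refine e.symm.trans ?_
    rw [Fintype.sum_prod_type]
    refine Finset.sum_congr rfl fun i _ => ?_
    split_ifs with hp
    · rw [← ih, Finset.mul_sum]
      refine Finset.sum_congr rfl fun j _ => ?_
      have hc : (StrictMono (Fin.consEquiv (fun _ : Fin (l.length + 1) => Fin n) (i, j)) ∧
          ∀ a, p ≤ ((Fin.consEquiv (fun _ : Fin (l.length + 1) => Fin n) (i, j)) a : ℕ)) ↔
          (StrictMono j ∧ ∀ a, (i : ℕ) + 1 ≤ (j a : ℕ)) := by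
        constructor
        · rintro ⟨h1, h2⟩
          refine ⟨fun x y hxy => ?_, fun a => ?_⟩
          · simpa [Fin.consEquiv] using h1 (Fin.succ_lt_succ_iff.2 hxy)
          · have := h1 (Fin.succ_pos a)
            simpa [Fin.consEquiv] using this
        · rintro ⟨h1, h2⟩
          refine ⟨?_, ?_⟩
          · intro x y hxy
            induction x using Fin.cases with
            | zero =>
              induction y using Fin.cases with
              | zero => exact absurd hxy (lt_irrefl _)
              | succ y => exact h2 y
            | succ x =>
              induction y using Fin.cases with
              | zero => exact absurd hxy (by simp)
              | succ y => exact h1 (Fin.succ_lt_succ_iff.1 hxy)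
          · intro a
            induction a using Fin.cases with
            | zero => exact hp
            | succ a => have := h2 a; simp [Fin.consEquiv]; omega
      simp only [hc]
      split_ifs
      · rw [Fin.prod_univ_succ]; simp [Fin.consEquiv]
      · simp
    · refine Finset.sum_eq_zero fun j _ => ?_
      rw [if_neg]
      rintro ⟨_, h2⟩
      exact hp (h2 0)

lemma Mpoly_eq (n : ℕ) (l : List ℕ) : Mpoly n l = Mr n 0 l := by
  rw [← Mge_eq]; simp [Mpoly]

/-- monomial, shifted parts -/
noncomputable def M (n p : ℕ) (l : List ℕ) : MvPolynomial (Fin n) ℚ := Mr n p (l.map (· + 1))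

lemma M_nil (n p : ℕ) : M n p [] = 1 := rfl

lemma Mr_cons (n p : ℕ) (hp : p < n) (a : ℕ) (l : List ℕ) :
    Mr n p (a :: l) = Mr n (p+1) (a :: l) + X ⟨p, hp⟩ ^ a * Mr n (p+1) l := by
  rw [Mr, Mr, ← Finset.add_sum_erase _ _ (Finset.mem_univ (⟨p, hp⟩ : Fin n)),
    ← Finset.add_sum_erase Finset.univ (fun i : Fin n => if p + 1 ≤ (i : ℕ) then
      X i ^ a * Mr n ((i : ℕ) + 1) l else 0) (Finset.mem_univ (⟨p, hp⟩ : Fin n))]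
  have : ∀ i ∈ Finset.univ.erase (⟨p, hp⟩ : Fin n), (if p ≤ (i : ℕ) then
      (X i ^ a * Mr n ((i : ℕ) + 1) l : MvPolynomial (Fin n) ℚ) else 0) = if p + 1 ≤ (i : ℕ) then
      X i ^ a * Mr n ((i : ℕ) + 1) l else 0 := by
    intro i hi
    have : (i : ℕ) ≠ p := fun h => (Finset.mem_erase.1 hi).1 (Fin.ext h)
    have : p ≤ (i : ℕ) ↔ p + 1 ≤ i := by omega
    simp only [this]
  rw [Finset.sum_congr rfl this]
  simp
  ring

/-- polynomials in the variables `≥ p` -/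
noncomputable def Av (n p : ℕ) : Subalgebra ℚ (MvPolynomial (Fin n) ℚ) :=
  Algebra.adjoin ℚ {f : MvPolynomial (Fin n) ℚ | ∃ i : Fin n, p ≤ (i : ℕ) ∧ f = X i}

lemma X_mem_Av (n p : ℕ) (i : Fin n) (h : p ≤ (i : ℕ)) :
    (X i : MvPolynomial (Fin n) ℚ) ∈ Av n p := Algebra.subset_adjoin ⟨i, h, rfl⟩

lemma Av_anti (n : ℕ) {p q : ℕ} (h : p ≤ q) : Av n q ≤ Av n p := by
  refine Algebra.adjoin_mono ?_
  rintro f ⟨j, hj, rfl⟩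
  exact ⟨j, by omega, rfl⟩

lemma Mr_mem (n : ℕ) (l : List ℕ) : ∀ p : ℕ,
    Mr n p l ∈ Av n p := by
  induction l with
  | nil => intro p; exact one_mem _
  | cons a l ih =>
    intro p
    rw [Mr]
    refine sum_mem fun i _ => ?_
    split_ifs with h
    · exact mul_mem (pow_mem (X_mem_Av n p i h) _) (Av_anti n (by omega) (ih _))
    · exact zero_mem _

/-- add one to the first part -/
def inc : List ℕ → List ℕ
  | [] => []
  | b :: t => (b + 1) :: t

def refsAux (r : List (List ℕ)) : ℕ → List (List ℕ)
  | 0 => r.map (List.cons 0)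
  | a + 1 => (refsAux r a).map (List.cons 0) ++ (refsAux r a).map inc

/-- refinements -/
def refs : List ℕ → List (List ℕ)
  | [] => [[]]
  | a :: u => refsAux (refs u) a

lemma refsAux_ne (r : List (List ℕ)) (a : ℕ) : ∀ l ∈ refsAux r a, l ≠ [] := by
  induction a with
  | zero => intro l hl; simp [refsAux] at hl; obtain ⟨_, _, rfl⟩ := hl; simp
  | succ a ih =>
    intro l hl
    simp only [refsAux, List.mem_append, List.mem_map] at hl
    rcases hl with ⟨_, _, rfl⟩ | ⟨t, ht, rfl⟩
    · simp
    · have := ih t ht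
      cases t with
      | nil => exact absurd rfl this
      | cons => simp [inc]

/-- fundamental quasi-symmetric polynomials in variables `≥ p`, shifted parts -/
noncomputable def F (n p : ℕ) (u : List ℕ) : MvPolynomial (Fin n) ℚ := ((refs u).map (M n p)).sum

lemma F_nil (n p : ℕ) : F n p [] = 1 := by simp [F, refs, M_nil]

lemma M_zero_cons (n p : ℕ) (hp : p < n) (l : List ℕ) :
    M n p (0 :: l) = M n (p+1) (0 :: l) + X ⟨p, hp⟩ * M n (p+1) l := by
  have := Mr_cons n p hp 1 (l.map (· + 1))
  simpa [M] using this

lemma M_inc (n p : ℕ) (hp : p < n) (l : List ℕ) (hl : l ≠ []) :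
    M n p (inc l) = M n (p+1) (inc l) + X ⟨p, hp⟩ * (M n p l - M n (p+1) l) := by
  cases l with
  | nil => exact absurd rfl hl
  | cons b t =>
    have h1 := Mr_cons n p hp (b + 1 + 1) (t.map (· + 1))
    have h2 := Mr_cons n p hp (b + 1) (t.map (· + 1))
    simp only [M, inc, List.map_cons]
    rw [h1, h2]; ring

lemma F_zero_cons (n p : ℕ) (hp : p < n) (u : List ℕ) :
    F n p (0 :: u) = F n (p+1) (0 :: u) + X ⟨p, hp⟩ * F n (p+1) u := by
  simp only [F, refs, refsAux, List.map_map]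
  induction refs u with
  | nil => simp
  | cons t r ih => 
    simp only [List.map_cons, List.sum_cons, Function.comp] at ih ⊢
    rw [ih, M_zero_cons n p hp t]; ring

lemma F_succ_cons (n p : ℕ) (hp : p < n) (a : ℕ) (u : List ℕ) :
    F n p ((a + 1) :: u) = F n (p+1) ((a + 1) :: u) + X ⟨p, hp⟩ * F n p (a :: u) := by
  simp only [F, refs, refsAux, List.map_map, List.map_append, List.sum_append]
  have := refsAux_ne (refs u) a
  revert this
  induction refsAux (refs u) a with
  | nil => intro _; simp
  | cons t r ih =>
    intro this
    have h1 := ih (fun l hl => this l (List.mem_cons_of_mem _ hl))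
    simp only [List.map_cons, List.sum_cons, Function.comp] at h1 ⊢
    rw [M_zero_cons n p hp t, M_inc n p hp t (this t List.mem_cons_self)]
    linear_combination h1

lemma F_mem (n p : ℕ) (u : List ℕ) : 
    F n p u ∈ Av n p := by
  refine list_sum_mem fun f hf => ?_
  obtain ⟨l, _, rfl⟩ := List.mem_map.1 hf
  exact Mr_mem _ _ _

lemma F_mem_J (n : ℕ) (a : ℕ) (u : List ℕ) : F n 0 (a :: u) ∈ Jn n := by
  refine list_sum_mem fun f hf => ?_
  obtain ⟨l, hl, rfl⟩ := List.mem_map.1 hf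
  refine Ideal.subset_span ⟨l.map (· + 1), ?_, ?_, (Mpoly_eq _ _).symm⟩
  · simpa using refsAux_ne _ _ l hl
  · simp

/-- lower terms with respect to the first `p` coordinates -/
noncomputable def Low (n : ℕ) (a : ℕ → ℕ) (p : ℕ) : Submodule ℚ (MvPolynomial (Fin n) ℚ) :=
  Submodule.span ℚ {f | ∃ m : Fin n →₀ ℕ, (∃ k : Fin n, (k : ℕ) < p ∧ m k < a k ∧
    ∀ i < k, m i = a i) ∧ f = monomial m 1}

lemma Low_mono (n : ℕ) (a : ℕ → ℕ) {p q : ℕ} (h : p ≤ q) : Low n a p ≤ Low n a q := by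
  refine Submodule.span_mono ?_
  rintro f ⟨m, ⟨k, hk, h1⟩, rfl⟩
  exact ⟨m, ⟨k, by omega, h1⟩, rfl⟩

lemma Low_mul_X (n : ℕ) (a : ℕ → ℕ) (p : ℕ) (i : Fin n) (hi : p ≤ (i : ℕ))
    (f : MvPolynomial (Fin n) ℚ) (hf : f ∈ Low n a p) : f * X i ∈ Low n a p := by
  induction hf using Submodule.span_induction with
  | mem f hf =>
    obtain ⟨m, ⟨k, hk, h1, h2⟩, rfl⟩ := hf
    refine Submodule.subset_span ⟨m + Finsupp.single i 1, ⟨k, hk, ?_, ?_⟩, ?_⟩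
    · have : i ≠ k := by rintro rfl; omega
      simpa [Finsupp.single_apply, this] using h1
    · intro j hj
      have : i ≠ j := by rintro rfl; have : (i : ℕ) < k := hj; omega
      simpa [Finsupp.single_apply, this] using h2 j hj
    · rw [X, monomial_mul, one_mul]
  | zero => simp
  | add f g _ _ h1 h2 => rw [add_mul]; exact add_mem h1 h2
  | smul c f _ h => rw [smul_mul_assoc]; exact Submodule.smul_mem _ _ h

lemma Low_mul (n : ℕ) (a : ℕ → ℕ) (p : ℕ) (f g : MvPolynomial (Fin n) ℚ)
    (hf : f ∈ Low n a p) (hg : g ∈ Av n p) : f * g ∈ Low n a p := by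
  unfold Av at hg
  induction hg using Algebra.adjoin_induction generalizing f with
  | mem g hg => obtain ⟨i, hi, rfl⟩ := hg; exact Low_mul_X n a p i hi f hf
  | algebraMap r => 
    rw [mul_comm, ← Algebra.smul_def]; exact Submodule.smul_mem _ _ hf
  | add g h _ _ h1 h2 => rw [mul_add]; exact add_mem (h1 f hf) (h2 f hf)
  | mul g h _ _ h1 h2 => rw [← mul_assoc]; exact h2 _ (h1 f hf)

/-- truncated exponent vector -/
noncomputable def preM (n : ℕ) (a : ℕ → ℕ) (p : ℕ) : Fin n →₀ ℕ :=
  Finsupp.equivFunOnFinite.symm (fun i => if (i : ℕ) < p then a i else 0)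

lemma preM_apply (n : ℕ) (a : ℕ → ℕ) (p : ℕ) (i : Fin n) :
    preM n a p i = if (i : ℕ) < p then a i else 0 := rfl

/-- truncated monomial -/
noncomputable def pre (n : ℕ) (a : ℕ → ℕ) (p : ℕ) : MvPolynomial (Fin n) ℚ :=
  monomial (preM n a p) 1

lemma pre_zero (n : ℕ) (a : ℕ → ℕ) : pre n a 0 = 1 := by
  have : preM n a 0 = 0 := by ext i; simp [preM_apply]
  rw [pre, this]; rfl

lemma pre_succ (n : ℕ) (a : ℕ → ℕ) (p : ℕ) (hp : p < n) :
    pre n a (p+1) = pre n a p * X ⟨p, hp⟩ ^ a p := by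
  rw [pre, pre, X_pow_eq_monomial, monomial_mul, one_mul]
  congr 2
  ext i
  rw [Finsupp.add_apply, preM_apply, preM_apply, Finsupp.single_apply]
  rcases lt_trichotomy (i : ℕ) p with h | h | h
  · rw [if_pos (by omega), if_pos h, if_neg (by rintro rfl; simp at h), add_zero]
  · subst h; simp
  · rw [if_neg (by omega), if_neg (by omega), if_neg (by rintro rfl; simp at h), add_zero]

lemma pre_low (n : ℕ) (a : ℕ → ℕ) (p : ℕ) (hp : p < n) (c : ℕ) (hc : c < a p) :
    pre n a p * X ⟨p, hp⟩ ^ c ∈ Low n a (p+1) := by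
  refine Submodule.subset_span ⟨preM n a p + Finsupp.single ⟨p, hp⟩ c, ⟨⟨p, hp⟩, ?_, ?_, ?_⟩, ?_⟩
  · simp
  · simpa [preM_apply] using hc
  · intro i hi
    have h1 : (i : ℕ) < p := hi
    rw [Finsupp.add_apply, preM_apply, Finsupp.single_apply, if_pos h1, if_neg hi.ne', add_zero]
  · rw [pre, X_pow_eq_monomial, monomial_mul, one_mul]

lemma lead_aux (n : ℕ) (a : ℕ → ℕ) (p : ℕ) (hp : p < n) (u : List ℕ) (b : ℕ) :
    ∀ c, c + b + 1 = a p → pre n a p * X ⟨p, hp⟩ ^ c * F n p (b :: u)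
      - pre n a (p+1) * F n (p+1) u ∈ Low n a (p+1) := by
  induction b with
  | zero =>
    intro c hc
    have h := Low_mul n a (p+1) _ _ (pre_low n a p hp c (by omega)) (F_mem n (p+1) (0 :: u))
    convert h using 1
    rw [pre_succ n a p hp, F_zero_cons n p hp, ← hc]; ring
  | succ b ih =>
    intro c hc
    have h := Low_mul n a (p+1) _ _ (pre_low n a p hp c (by omega)) (F_mem n (p+1) ((b+1) :: u))
    convert add_mem h (ih (c+1) (by omega)) using 1
    rw [F_succ_cons n p hp]; ring

/-- the operator which removes a variable -/
noncomputable def N (n : ℕ) (x : MvPolynomial (Fin n) ℚ) (φ : List ℕ → MvPolynomial (Fin n) ℚ) :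
    List ℕ → MvPolynomial (Fin n) ℚ
  | [] => φ []
  | 0 :: u => φ (0 :: u) - x * N n x φ u
  | (b + 1) :: u => φ ((b + 1) :: u) - x * φ (b :: u)

/-- the partially processed family -/
noncomputable def phi (n : ℕ) (a : ℕ → ℕ) : ℕ → List ℕ → MvPolynomial (Fin n) ℚ
  | 0 => F n 0
  | p + 1 => if a p = 0 then N n (if h : p < n then X ⟨p, h⟩ else 0) (phi n a p)
      else fun u => phi n a p ((a p - 1) :: u)

lemma N_lead (n : ℕ) (a : ℕ → ℕ) (p : ℕ) (hp : p < n) (g : MvPolynomial (Fin n) ℚ)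
    (φ : List ℕ → MvPolynomial (Fin n) ℚ)
    (h : ∀ u, φ u - g * F n p u ∈ Low n a p) (u : List ℕ) :
    N n (X ⟨p, hp⟩) φ u - g * F n (p+1) u ∈ Low n a p := by
  have hx := Low_mul_X n a p ⟨p, hp⟩ le_rfl
  induction u with
  | nil => have := h []; rw [F_nil] at this; rw [N, F_nil]; exact this
  | cons b u ih =>
    cases b with
    | zero =>
      convert sub_mem (h (0 :: u)) (hx _ ih) using 1
      rw [N, F_zero_cons n p hp]; ring
    | succ b =>
      convert sub_mem (h ((b+1) :: u)) (hx _ (h (b :: u))) using 1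
      rw [N, F_succ_cons n p hp]; ring

lemma phi_lead (n : ℕ) (a : ℕ → ℕ) (p : ℕ) : ∀ (_ : p ≤ n) (u : List ℕ),
    phi n a p u - pre n a p * F n p u ∈ Low n a p := by
  induction p with
  | zero => intro _ u; simp [phi, pre_zero]
  | succ p ih =>
    intro hp u
    have hp' : p < n := hp
    rw [phi]
    split_ifs with h0
    · refine Low_mono n a (Nat.le_succ p) ?_
      rw [pre_succ n a p hp', h0, pow_zero, mul_one]
      exact N_lead n a p hp' _ _ (ih hp'.le) u
    · have h1 := Low_mono n a (Nat.le_succ p) (ih hp'.le ((a p - 1) :: u))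
      have h2 := lead_aux n a p hp' u (a p - 1) 0 (by omega)
      convert add_mem h1 h2 using 1
      ring

lemma phi_mem (n : ℕ) (a : ℕ → ℕ) (p : ℕ) : ∀ u : List ℕ, 1 ≤ p + u.length →
    p ≤ (∑ i ∈ Finset.range p, a i) + u.sum → phi n a p u ∈ Jn n := by
  induction p with
  | zero =>
    intro u hu _
    cases u with
    | nil => simp at hu
    | cons b u => exact F_mem_J n b u
  | succ p ih =>
    intro u _ hs
    rw [Finset.sum_range_succ] at hs
    rw [phi]
    by_cases h0 : a p = 0
    · rw [if_pos h0]
      rw [h0, add_zero] at hs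
      generalize (if h : p < n then (X ⟨p, h⟩ : MvPolynomial (Fin n) ℚ) else 0) = x
      induction u with
      | nil =>
        simp only [List.sum_nil] at hs
        rw [N]
        refine ih [] ?_ (by simp only [List.sum_cons, List.sum_nil]; omega)
        rcases p with _ | p
        · simp at hs
        · simp
      | cons b u ihu =>
        simp only [List.sum_cons] at hs
        cases b with
        | zero =>
          rw [N]
          exact sub_mem (ih _ (by simp only [List.length_cons]; omega) (by simp only [List.sum_cons, List.sum_nil]; omega))
            (Ideal.mul_mem_left _ _ (ihu (by omega) (by omega)))
        | succ b =>
          rw [N]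
          exact sub_mem (ih _ (by simp only [List.length_cons]; omega) (by simp only [List.sum_cons, List.sum_nil]; omega))
            (Ideal.mul_mem_left _ _ (ih _ (by simp only [List.length_cons]; omega) (by simp only [List.sum_cons, List.sum_nil]; omega)))
    · rw [if_neg h0]
      refine ih _ (by simp only [List.length_cons]; omega) ?_
      simp only [List.sum_cons]; omega

/-- 0-Catalan condition -/
def Cat (n : ℕ) (a : ℕ → ℕ) : Prop := ∀ j, 1 ≤ j → j ≤ n → ∑ i ∈ Finset.range j, a i < j

/-- extension by zero -/
def ext0 (n : ℕ) (m : Fin n → ℕ) : ℕ → ℕ := fun i => if h : i < n then m ⟨i, h⟩ else 0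

lemma ext0_apply (n : ℕ) (m : Fin n → ℕ) (i : Fin n) : ext0 n m i = m i := by simp [ext0]

lemma reduce (n : ℕ) (m : Fin n →₀ ℕ) (h : ¬ Cat n (ext0 n m)) :
    ∃ g ∈ Low n (ext0 n m) n, monomial m 1 - g ∈ Jn n := by
  unfold Cat at h
  push Not at h
  obtain ⟨j, h1, h2, h3⟩ := h
  set a := ext0 n m with ha
  have hJ := phi_mem n a j [] (by simpa using h1) (by simpa using h3)
  have hL := phi_lead n a j h2 []
  rw [F_nil, mul_one] at hL
  set r : Fin n →₀ ℕ := Finsupp.equivFunOnFinite.symm (fun i => if (i : ℕ) < j then 0 else m i)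
    with hr
  have hr' : ∀ i, r i = if (i : ℕ) < j then 0 else m i := fun i => rfl
  have hrA : (monomial r 1 : MvPolynomial (Fin n) ℚ) ∈ Av n j := by
    rw [monomial_eq, C_1, one_mul, Finsupp.prod]
    refine prod_mem fun i hi => pow_mem (X_mem_Av n j i ?_) _
    by_contra hlt
    rw [Finsupp.mem_support_iff, hr', if_pos (by omega)] at hi
    exact hi rfl
  have hm : (monomial m 1 : MvPolynomial (Fin n) ℚ) = pre n a j * monomial r 1 := by
    rw [pre, monomial_mul, one_mul]
    congr 2
    ext i
    rw [Finsupp.add_apply, preM_apply, hr', ha, ext0_apply]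
    split_ifs <;> simp
  refine ⟨-((phi n a j [] - pre n a j) * monomial r 1), neg_mem (Low_mono n a h2 
    (Low_mul n a j _ _ hL hrA)), ?_⟩
  have : monomial m 1 - -((phi n a j [] - pre n a j) * monomial r 1) =
    phi n a j [] * monomial r 1 := by rw [hm]; ring
  rw [this]
  exact Ideal.mul_mem_right _ _ hJ

/-- the span -/
noncomputable def Sp (n : ℕ) : Submodule ℚ (MvPolynomial (Fin n) ℚ ⧸ Jn n) :=
  Submodule.span ℚ (Ideal.Quotient.mk (Jn n) ''
    {f | ∃ m : Fin n →₀ ℕ, Cat n (ext0 n m) ∧ f = monomial m 1})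

lemma mono_mem (n : ℕ) (m : Lex (Fin n → ℕ)) :
    (Ideal.Quotient.mkₐ ℚ (Jn n)) (monomial (Finsupp.equivFunOnFinite.symm (ofLex m)) 1) ∈ Sp n := by
  induction m using WellFoundedLT.induction with
  | ind m ih =>
    set v : Fin n →₀ ℕ := Finsupp.equivFunOnFinite.symm (ofLex m) with hv
    by_cases h : Cat n (ext0 n v)
    · exact Submodule.subset_span ⟨_, ⟨v, h, rfl⟩, rfl⟩
    · obtain ⟨g, hg, hJ⟩ := reduce n v h
      have : (Ideal.Quotient.mkₐ ℚ (Jn n)) (monomial v 1) = (Ideal.Quotient.mkₐ ℚ (Jn n)) g :=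
        Ideal.Quotient.eq.2 hJ
      rw [this]
      have hle : Low n (ext0 n v) n ≤ (Sp n).comap (Ideal.Quotient.mkₐ ℚ (Jn n)).toLinearMap := by
        refine Submodule.span_le.2 ?_
        rintro f ⟨w, ⟨k, _, h1, h2⟩, rfl⟩
        have := ih (toLex w) ⟨k, fun i hi => ?_, ?_⟩
        · simpa using this
        · have := h2 i hi
          rwa [ext0_apply] at this
        · rwa [ext0_apply] at h1
      exact hle hg

lemma Sp_top (n : ℕ) : Sp n = ⊤ := by
  rw [eq_top_iff]
  rintro x -
  obtain ⟨f, rfl⟩ := Ideal.Quotient.mk_surjective x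
  change (Ideal.Quotient.mkₐ ℚ (Jn n)) f ∈ Sp n
  rw [f.as_sum, map_sum]
  refine sum_mem fun m _ => ?_
  have := mono_mem n (toLex m)
  have h2 := Submodule.smul_mem _ (coeff m f) this
  rw [← map_smul, smul_monomial] at h2
  simpa using h2

/-- ballot numbers -/
def tb (n : ℕ) : ℕ → ℤ
  | 0 => 1
  | s + 1 => ((n + s + 1).choose (s + 1) : ℤ) - ((n + s + 1).choose s : ℤ)

lemma tb_rec (n s : ℕ) : tb (n+1) (s+1) = tb (n+1) s + tb n (s+1) := by
  cases s with
  | zero => simp [tb]; ring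
  | succ s =>
    simp only [tb]
    have e1 : n + 1 + (s + 1) + 1 = (n + s + 2) + 1 := by ring
    have e2 : n + 1 + s + 1 = n + s + 2 := by ring
    have e3 : n + (s + 1) + 1 = n + s + 2 := by ring
    rw [e1, e2, e3, Nat.choose_succ_succ (n + s + 2) (s + 1), Nat.choose_succ_succ (n + s + 2) s]
    push_cast
    ring

lemma tb_diag (n : ℕ) : tb (n+1) (n+1) = tb (n+1) n := by
  cases n with
  | zero => simp [tb]
  | succ s =>
    simp only [tb]
    have e1 : s + 1 + 1 + (s + 1) + 1 = (2 * (s+1) + 1) + 1 := by ring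
    have e2 : s + 1 + 1 + s + 1 = 2 * (s+1) + 1 := by ring
    rw [e1, e2, Nat.choose_succ_succ (2 * (s+1) + 1) (s + 1),
      Nat.choose_succ_succ (2 * (s+1) + 1) s, Nat.choose_symm_half (s+1)]
    push_cast
    ring

lemma tb_catalan (n : ℕ) : tb n n = catalan n := by
  cases n with
  | zero => simp [tb]
  | succ n =>
    have h1 := succ_mul_catalan_eq_centralBinom (n+1)
    rw [Nat.centralBinom] at h1
    have h2 := Nat.choose_succ_right_eq (2 * (n+1)) n
    have e : 2 * (n + 1) - n = n + 2 := by omega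
    rw [e] at h2
    have e1 : n + 1 + n + 1 = 2 * (n + 1) := by ring
    simp only [tb]
    rw [e1]
    zify at h1 h2
    have : ((n : ℤ) + 2) ≠ 0 := by positivity
    apply mul_left_cancel₀ this
    linear_combination h2 - h1

lemma cover (n : ℕ) : ∀ s, s ≤ n → ∃ W : Finset (ℕ → ℕ), (W.card : ℤ) ≤ tb n s ∧
    ∀ a : ℕ → ℕ, Cat n a → (∀ i, n ≤ i → a i = 0) → ∑ i ∈ Finset.range n, a i ≤ s → a ∈ W := by
  have base : ∀ n, ∃ W : Finset (ℕ → ℕ), (W.card : ℤ) ≤ tb n 0 ∧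
    ∀ a : ℕ → ℕ, Cat n a → (∀ i, n ≤ i → a i = 0) → ∑ i ∈ Finset.range n, a i ≤ 0 → a ∈ W := by
    intro n
    refine ⟨{fun _ => 0}, by simp [tb], fun a _ h1 h2 => ?_⟩
    rw [Finset.mem_singleton]
    funext i
    rcases le_or_gt n i with h | h
    · exact h1 i h
    · exact Finset.sum_eq_zero_iff.1 (Nat.le_zero.1 h2) i (Finset.mem_range.2 h)
  induction n with
  | zero =>
    intro s hs
    obtain rfl : s = 0 := by omega
    exact base 0
  | succ n ih =>
    intro s
    induction s with
    | zero => intro _; exact base (n+1)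
    | succ s ihs =>
      intro hs
      obtain ⟨W1, hW1, hc1⟩ := ihs (by omega)
      rcases Nat.lt_or_ge s n with hsn | hsn
      · obtain ⟨W2, hW2, hc2⟩ := ih (s+1) (by omega)
        refine ⟨W1 ∪ W2.image (fun b => Function.update b n (s + 1 - ∑ i ∈ Finset.range n, b i)),
          ?_, fun a h1 h2 h3 => ?_⟩
        · rw [tb_rec]
          have h1 := Finset.card_union_le W1
            (W2.image (fun b => Function.update b n (s + 1 - ∑ i ∈ Finset.range n, b i)))
          have h2 := Finset.card_image_le (s := W2)
            (f := (fun b => Function.update b n (s + 1 - ∑ i ∈ Finset.range n, b i)))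
          zify at h1 h2
          linarith
        · rw [Finset.mem_union]
          rcases Nat.lt_or_ge (∑ i ∈ Finset.range (n+1), a i) (s+1) with h | h
          · exact Or.inl (hc1 a h1 h2 (by omega))
          · right
            have hsum : ∀ j ≤ n, ∑ i ∈ Finset.range j, Function.update a n 0 i =
                ∑ i ∈ Finset.range j, a i := by
              intro j hj
              refine Finset.sum_congr rfl fun i hi => ?_
              have := Finset.mem_range.1 hi
              exact Function.update_of_ne (by omega) _ _
            rw [Finset.sum_range_succ] at h h3
            refine Finset.mem_image.2 ⟨Function.update a n 0, hc2 _ ?_ ?_ ?_, ?_⟩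
            · intro j hj1 hj2
              rw [hsum j hj2]
              exact h1 j hj1 (by omega)
            · intro i hi
              rcases eq_or_ne i n with rfl | hne
              · simp
              · rw [Function.update_of_ne hne]; exact h2 i (by omega)
            · rw [hsum n le_rfl]; omega
            · rw [hsum n le_rfl, Function.update_idem]
              have : s + 1 - ∑ i ∈ Finset.range n, a i = a n := by omega
              rw [this, Function.update_eq_self]
      · obtain rfl : s = n := by omega
        refine ⟨W1, by rw [tb_diag]; exact hW1, fun a h1 h2 h3 => hc1 a h1 h2 ?_⟩
        have := h1 (s+1) (by omega) le_rfl
        omega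

lemma sum_filter_ext0 (n : ℕ) (a : Fin n → ℕ) (j : ℕ) (hj : j ≤ n) :
    ∑ i ∈ Finset.univ.filter (fun i : Fin n => (i : ℕ) < j), a i =
      ∑ i ∈ Finset.range j, ext0 n a i := by
  have h : Finset.range j = (Finset.range n).filter (· < j) := by
    ext i; simp only [Finset.mem_range, Finset.mem_filter]; omega
  rw [h, Finset.sum_filter, Finset.sum_filter, Finset.sum_range]
  simp only [ext0_apply]

lemma set_eq (n : ℕ) : {m : MvPolynomial (Fin n) ℚ | ∃ a : Fin n → ℕ,
            (∀ j, 1 ≤ j → j ≤ n →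
              (∑ i ∈ Finset.univ.filter fun i : Fin n => (i : ℕ) < j, a i) < j) ∧
            m = ∏ i, MvPolynomial.X i ^ a i} =
    {f | ∃ m : Fin n →₀ ℕ, Cat n (ext0 n m) ∧ f = monomial m 1} := by
  ext f
  have hmon : ∀ m : Fin n →₀ ℕ, (monomial m 1 : MvPolynomial (Fin n) ℚ) = ∏ i, X i ^ m i := by
    intro m
    rw [monomial_eq, C_1, one_mul, Finsupp.prod_fintype _ _ (by simp)]
  constructor
  · rintro ⟨a, h, rfl⟩
    refine ⟨Finsupp.equivFunOnFinite.symm a, fun j h1 h2 => ?_, ?_⟩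
    · have := h j h1 h2
      rwa [sum_filter_ext0 n a j h2] at this
    · rw [hmon]; rfl
  · rintro ⟨m, h, rfl⟩
    refine ⟨m, fun j h1 h2 => ?_, hmon m⟩
    rw [sum_filter_ext0 n m j h2]
    exact h j h1 h2

lemma fin_cover (n : ℕ) : ∃ W : Finset (MvPolynomial (Fin n) ℚ ⧸ Jn n), W.card ≤ catalan n ∧
    Submodule.span ℚ (W : Set (MvPolynomial (Fin n) ℚ ⧸ Jn n)) = ⊤ := by
  obtain ⟨W, hW, hc⟩ := cover n n le_rfl
  rw [tb_catalan] at hW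
  refine ⟨W.image (fun a => Ideal.Quotient.mk (Jn n) (pre n a n)),
    Finset.card_image_le.trans (by exact_mod_cast hW), ?_⟩
  rw [eq_top_iff, ← Sp_top]
  refine Submodule.span_mono ?_
  rintro _ ⟨_, ⟨m, hm, rfl⟩, rfl⟩
  rw [Finset.coe_image]
  refine ⟨ext0 n m, hc _ hm (fun i hi => ?_) ?_, ?_⟩
  · simp [ext0, Nat.not_lt.2 hi]
  · rcases Nat.eq_zero_or_pos n with rfl | hn
    · simp
    · exact (hm n hn le_rfl).le
  · have : preM n (ext0 n m) n = m := by
      ext i; rw [preM_apply, if_pos i.2, ext0_apply]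
    simp only [pre, this]

end QS

/-- The quotient `R_n = ℚ[x₁,…,x_n]/J_n` is a finite-dimensional `ℚ`-vector space of
dimension at most the Catalan number `C_n = (1/(n+1))·binom(2n,n)`; moreover it is
spanned by the images of the monomials `x₁^{a₁}⋯x_n^{a_n}` with `a₁+⋯+a_j < j` for all
`j ∈ {1,…,n}` (the monomials of type 0-Catalan). -/
theorem Rn_dim_le_catalan (n : ℕ) (hn : 1 ≤ n) :
    FiniteDimensional ℚ (MvPolynomial (Fin n) ℚ ⧸ Jn n) ∧
    Module.finrank ℚ (MvPolynomial (Fin n) ℚ ⧸ Jn n) ≤ catalan n ∧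
    (n + 1) * catalan n = (2 * n).choose n ∧
    Submodule.span ℚ
        (Ideal.Quotient.mk (Jn n) ''
          {m : MvPolynomial (Fin n) ℚ | ∃ a : Fin n → ℕ,
            (∀ j, 1 ≤ j → j ≤ n →
              (∑ i ∈ Finset.univ.filter fun i : Fin n => (i : ℕ) < j, a i) < j) ∧
            m = ∏ i, MvPolynomial.X i ^ a i}) = ⊤ := by
  obtain ⟨W, hW, hs⟩ := QS.fin_cover n
  refine ⟨?_, ?_, ?_, ?_⟩
  · exact ⟨⟨W, hs⟩⟩
  · have h := finrank_span_finset_le_card (R := ℚ) W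
    rw [Set.finrank, hs, finrank_top] at h
    exact h.trans hW
  · rw [succ_mul_catalan_eq_centralBinom, Nat.centralBinom]
  · rw [QS.set_eq]
    exact QS.Sp_top n
end

section
/- More generally, for every e ≥ 0 and n ≥ 1, dim_ℚ R_n^(e) ≤ C_n^(e), where R_n^(e) = ℚ[x₁,...,x_n]/J_n^(e), J_n^(e) is generated by the F_α(x₁,...,x_n) with α admitting a prefix π satisfying sum(π) - length(π) ≥ e, and C_n^(e) is the number of lattice paths from (0,0) to (n+e,n) staying weakly above the line y = x - e. -/
open scoped Classical

/-- Descent set of a composition (list of positive parts): partial sums. -/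
def descents (l : List ℕ) : Finset ℕ :=
  (Finset.Ioo 0 l.length).image (fun k => (l.take k).sum)

/-- The fundamental quasi-symmetric polynomial in `n` variables of degree `d` with
descent set `D`, obtained from the fundamental quasi-symmetric function by setting
`x_i = 0` for `i > n`: the sum of `x_{j₁}⋯x_{j_d}` over weakly increasing
`j : Fin d → Fin n` with strict increase at the positions of `D`. -/
noncomputable def Fpoly (n d : ℕ) (D : Finset ℕ) : MvPolynomial (Fin n) ℚ :=
  ∑ j : Fin d → Fin n,
    if (Monotone j ∧
        ∀ a b : Fin d, (a : ℕ) + 1 = (b : ℕ) → (a : ℕ) + 1 ∈ D → j a < j b) then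
      ∏ i, MvPolynomial.X (j i)
    else 0

/-- The ideal `J_n^(e)` of `ℚ[x₁,…,x_n]` generated by the `F_α(x₁,…,x_n)` with `α`
admitting a (nonempty) prefix `π` satisfying `sum(π) - length(π) ≥ e`. -/
noncomputable def Jne (n e : ℕ) : Ideal (MvPolynomial (Fin n) ℚ) :=
  Ideal.span {P | ∃ l : List ℕ, (∀ x ∈ l, 0 < x) ∧
    (∃ k : ℕ, 0 < k ∧ k + e ≤ (l.take k).sum) ∧ P = Fpoly n l.sum (descents l)}

namespace RD
variable (n : ℕ)

noncomputable def Xv (s : ℕ) : MvPolynomial (Fin n) ℚ :=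
  if h : s < n then MvPolynomial.X ⟨s, h⟩ else 0

noncomputable def Q (s d : ℕ) (E : ℕ → Prop) : MvPolynomial (Fin n) ℚ :=
  ∑ j : Fin d → Fin n,
    if ((∀ i, s ≤ (j i : ℕ)) ∧ Monotone j ∧
        ∀ a b : Fin d, (a : ℕ) + 1 = (b : ℕ) → E a → j a < j b) then
      ∏ i, MvPolynomial.X (j i)
    else 0

def EE (l : List ℕ) (k : ℕ) : Prop := k + 1 ∈ descents l

lemma Q_zero (s : ℕ) (E : ℕ → Prop) : Q n s 0 E = 1 := by
  simp [Q, Monotone]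

lemma cond_cons (s d : ℕ) (E : ℕ → Prop) (x : Fin n) (j : Fin d → Fin n) :
    ((∀ i, s ≤ ((Fin.cons x j : Fin (d+1) → Fin n) i : ℕ)) ∧ Monotone (Fin.cons x j : Fin (d+1) → Fin n) ∧
        ∀ a b : Fin (d+1), (a : ℕ) + 1 = (b : ℕ) → E a →
          (Fin.cons x j : Fin (d+1) → Fin n) a < (Fin.cons x j : Fin (d+1) → Fin n) b) ↔
    (s ≤ (x : ℕ) ∧ ((∀ i, (x : ℕ) + (if E 0 then 1 else 0) ≤ (j i : ℕ)) ∧ Monotone j ∧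
        ∀ a b : Fin d, (a : ℕ) + 1 = (b : ℕ) → E (a + 1) → j a < j b)) := by
  constructor
  · rintro ⟨h1, h2, h3⟩
    refine ⟨by simpa using h1 0, ?_, ?_, ?_⟩
    · intro i
      have hx : x ≤ j i := by simpa using h2 (Fin.zero_le i.succ)
      split_ifs with hE
      · have hd : 0 < d := i.pos
        have h4 := h3 0 (Fin.succ ⟨0, hd⟩) (by simp) (by simpa using hE)
        have h5 : j ⟨0, hd⟩ ≤ j i := by
          have := h2 (show Fin.succ ⟨0, hd⟩ ≤ i.succ from Fin.succ_le_succ_iff.2 (Fin.mk_le_of_le_val (Nat.zero_le _)))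
          rwa [Fin.cons_succ, Fin.cons_succ] at this
        simp only [Fin.cons_zero, Fin.cons_succ] at h4
        have := lt_of_lt_of_le h4 h5
        have : (x : ℕ) < j i := this
        omega
      · exact hx
    · intro a b hab
      simpa using h2 (Fin.succ_le_succ_iff.2 hab)
    · intro a b hab hE
      simpa using h3 a.succ b.succ (by simp [hab]) (by simpa using hE)
  · rintro ⟨h0, h1, h2, h3⟩
    refine ⟨?_, ?_, ?_⟩
    · intro i
      refine Fin.cases ?_ (fun i => ?_) i
      · simpa using h0
      · have := h1 i
        simp only [Fin.cons_succ]; omega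
    · intro a b
      refine Fin.cases ?_ (fun a => ?_) a <;> refine Fin.cases ?_ (fun b => ?_) b
      · simp
      · intro _
        have := h1 b
        simp only [Fin.cons_succ, Fin.cons_zero, Fin.le_def]; omega
      · intro h; simp at h
      · intro h
        simpa using h2 (Fin.succ_le_succ_iff.1 h)
    · intro a b
      refine Fin.cases ?_ (fun a => ?_) a <;> refine Fin.cases ?_ (fun b => ?_) b
      · simp
      · intro _ hE
        have := h1 b
        have hE : E 0 := by simpa using hE
        simp only [hE, if_true] at this
        simp only [Fin.cons_succ, Fin.cons_zero, Fin.lt_def]; omega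
      · intro h; simp at h
      · intro h hE
        simpa using h3 a b (by simpa using h) (by simpa using hE)

lemma Q_succ_sum (s d : ℕ) (E : ℕ → Prop) :
    Q n s (d+1) E = ∑ x : Fin n, if s ≤ (x : ℕ) then
      MvPolynomial.X x * Q n (x + if E 0 then 1 else 0) d (fun k => E (k+1)) else 0 := by
  unfold Q
  rw [← (Fin.consEquiv (fun _ : Fin (d+1) => Fin n)).sum_comp, Fintype.sum_prod_type]
  refine Finset.sum_congr rfl fun x _ => ?_
  by_cases hs : s ≤ (x : ℕ)
  · rw [if_pos hs, Finset.mul_sum]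
    refine Finset.sum_congr rfl fun j _ => ?_
    have hc : (Fin.consEquiv (fun _ : Fin (d+1) => Fin n)) (x, j) = Fin.cons x j := rfl
    rw [hc]
    simp only [cond_cons, hs, true_and, Fin.prod_univ_succ, Fin.cons_zero, Fin.cons_succ, mul_ite, mul_zero]
  · rw [if_neg hs]
    refine Finset.sum_eq_zero fun j _ => ?_
    have hc : (Fin.consEquiv (fun _ : Fin (d+1) => Fin n)) (x, j) = Fin.cons x j := rfl
    rw [hc]
    simp only [cond_cons, hs, false_and, if_false]

lemma Q_succ (s d : ℕ) (E : ℕ → Prop) :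
    Q n s (d+1) E = Xv n s * Q n (s + if E 0 then 1 else 0) d (fun k => E (k+1))
      + Q n (s+1) (d+1) E := by
  rw [Q_succ_sum, Q_succ_sum]
  by_cases h : s < n
  · rw [← Finset.add_sum_erase _ _ (Finset.mem_univ (⟨s, h⟩ : Fin n))]
    rw [← Finset.add_sum_erase (s := Finset.univ) (a := (⟨s, h⟩ : Fin n)) (f := fun x : Fin n => if s + 1 ≤ (x : ℕ) then _ else _) (Finset.mem_univ _)]
    simp only [le_refl, if_true, Xv, h, dif_pos]
    rw [if_neg (by omega : ¬ (s + 1 ≤ s)), zero_add]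
    congr 1
    refine Finset.sum_congr rfl fun x hx => ?_
    have : (x : ℕ) ≠ s := fun hh => (Finset.mem_erase.1 hx).1 (Fin.ext hh)
    have : s ≤ (x : ℕ) ↔ s + 1 ≤ (x : ℕ) := by omega
    simp only [this]
  · simp only [Xv, h, dif_neg, not_false_iff, zero_mul, zero_add]
    refine Finset.sum_congr rfl fun x hx => ?_
    have := x.2
    rw [if_neg (by omega), if_neg (by omega)]

lemma Q_big (s d : ℕ) (E : ℕ → Prop) (h : n ≤ s) : Q n s (d+1) E = 0 := by
  rw [Q_succ_sum]
  refine Finset.sum_eq_zero fun x _ => ?_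
  have := x.2
  rw [if_neg (by omega)]

/-- lists encode compositions with parts decreased by one -/
noncomputable def F (s : ℕ) (b : List ℕ) : MvPolynomial (Fin n) ℚ :=
  Q n s (b.map Nat.succ).sum (EE (b.map Nat.succ))

lemma mem_descents (l : List ℕ) (k : ℕ) :
    k ∈ descents l ↔ ∃ i, 0 < i ∧ i < l.length ∧ (l.take i).sum = k := by
  simp [descents, and_assoc]

lemma EE_zero_zero (b : List ℕ) : EE ((0 :: b).map Nat.succ) 0 ↔ b ≠ [] := by
  unfold EE
  rw [mem_descents]
  constructor
  · rintro ⟨i, h1, h2, h3⟩ rfl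
    simp at h2; omega
  · intro h
    have := List.length_pos_iff.2 h
    exact ⟨1, by simp, by simp; omega, by simp⟩

lemma EE_zero_succ (b : List ℕ) (k : ℕ) : EE ((0 :: b).map Nat.succ) (k+1) ↔ EE (b.map Nat.succ) k := by
  unfold EE
  rw [mem_descents, mem_descents]
  constructor
  · rintro ⟨i, h1, h2, h3⟩
    obtain ⟨i, rfl⟩ : ∃ i', i = i' + 1 := ⟨i-1, by omega⟩
    simp at h2 h3
    refine ⟨i, ?_, by simpa using h2, by omega⟩
    rcases Nat.eq_zero_or_pos i with rfl | h
    · simp at h3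
    · exact h
  · rintro ⟨i, h1, h2, h3⟩
    simp at h2 h3
    exact ⟨i+1, by omega, by simpa using h2, by simp; omega⟩

lemma EE_succ_zero (c : ℕ) (b : List ℕ) : ¬ EE (((c+1) :: b).map Nat.succ) 0 := by
  unfold EE
  rw [mem_descents]
  rintro ⟨i, h1, h2, h3⟩
  obtain ⟨i, rfl⟩ : ∃ i', i = i' + 1 := ⟨i-1, by omega⟩
  simp at h3
  omega

lemma EE_succ_succ (c : ℕ) (b : List ℕ) (k : ℕ) :
    EE (((c+1) :: b).map Nat.succ) (k+1) ↔ EE ((c :: b).map Nat.succ) k := by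
  unfold EE
  rw [mem_descents, mem_descents]
  refine exists_congr fun i => and_congr_right fun hi => ?_
  obtain ⟨i, rfl⟩ : ∃ i', i = i' + 1 := ⟨i-1, by omega⟩
  simp
  intro _
  omega

lemma F_nil (s : ℕ) : F n s [] = 1 := by
  unfold F; exact Q_zero n _ _

lemma F_zero (s : ℕ) (b : List ℕ) :
    F n s (0 :: b) = Xv n s * F n (s+1) b + F n (s+1) (0 :: b) := by
  unfold F
  have : ((0 :: b).map Nat.succ).sum = (b.map Nat.succ).sum + 1 := by simp; omega
  rw [this, Q_succ]
  congr 2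
  have h2 : (fun k => EE ((0 :: b).map Nat.succ) (k+1)) = EE (b.map Nat.succ) :=
    funext fun k => propext (EE_zero_succ b k)
  rw [h2]
  cases b with
  | nil => simp [Q_zero]
  | cons a b => rw [if_pos ((EE_zero_zero _).2 (by simp))]

lemma F_succ (s c : ℕ) (b : List ℕ) :
    F n s ((c+1) :: b) = Xv n s * F n s (c :: b) + F n (s+1) ((c+1) :: b) := by
  unfold F
  have : (((c+1) :: b).map Nat.succ).sum = ((c :: b).map Nat.succ).sum + 1 := by simp; omega
  rw [this, Q_succ]
  congr 2
  have h2 : (fun k => EE (((c+1) :: b).map Nat.succ) (k+1)) = EE ((c :: b).map Nat.succ) :=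
    funext fun k => propext (EE_succ_succ c b k)
  rw [h2, if_neg (EE_succ_zero c b), add_zero]

lemma F_eq (b : List ℕ) : F n 0 b = Fpoly n (b.map Nat.succ).sum (descents (b.map Nat.succ)) := by
  simp [F, Q, Fpoly, EE]

lemma F_supp (s : ℕ) (b : List ℕ) : F n s b ∈ MvPolynomial.supported ℚ {i : Fin n | s ≤ (i : ℕ)} := by
  unfold F Q
  refine sum_mem fun j _ => ?_
  split_ifs with h
  · refine prod_mem fun i _ => ?_
    rw [MvPolynomial.X_mem_supported]
    exact h.1 i
  · exact zero_mem _

/-- shift functional -/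
noncomputable def Sh (s : ℕ) (φ : List ℕ → MvPolynomial (Fin n) ℚ) : List ℕ → MvPolynomial (Fin n) ℚ
  | [] => φ []
  | 0 :: b => φ (0 :: b) - Xv n s * Sh s φ b
  | (c+1) :: b => φ ((c+1) :: b) - Xv n s * φ (c :: b)

lemma Sh_F (s : ℕ) (b : List ℕ) : Sh n s (F n s) b = F n (s+1) b := by
  induction b with
  | nil => simp [Sh, F_nil]
  | cons a b ih =>
    cases a with
    | zero => rw [Sh, ih, F_zero]; ring
    | succ c => rw [Sh, F_succ]; ring

noncomputable def Ex : ℕ → List ℕ → (List ℕ → MvPolynomial (Fin n) ℚ) → MvPolynomial (Fin n) ℚ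
  | _, [], φ => φ []
  | s, 0 :: l, φ => Ex (s+1) l (Sh n s φ)
  | s, (a+1) :: l, φ => Ex (s+1) l (fun b => φ (a :: b))

lemma Ex_zero (s : ℕ) (l : List ℕ) (φ : List ℕ → MvPolynomial (Fin n) ℚ) :
    Ex n s (0 :: l) φ = Ex n (s+1) l (Sh n s φ) := by rw [Ex]

lemma Ex_succ (s a : ℕ) (l : List ℕ) (φ : List ℕ → MvPolynomial (Fin n) ℚ) :
    Ex n s ((a+1) :: l) φ = Ex n (s+1) l (fun b => φ (a :: b)) := by rw [Ex]

lemma Sh_lin (s : ℕ) (p : MvPolynomial (Fin n) ℚ) (φ ψ : List ℕ → MvPolynomial (Fin n) ℚ) (b : List ℕ) :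
    Sh n s (fun b => p * φ b + ψ b) b = p * Sh n s φ b + Sh n s ψ b := by
  induction b with
  | nil => simp [Sh]
  | cons a b ih =>
    cases a with
    | zero => simp only [Sh, ih]; ring
    | succ c => simp only [Sh]; ring

lemma Ex_lin (s : ℕ) (l : List ℕ) (p : MvPolynomial (Fin n) ℚ) (φ ψ : List ℕ → MvPolynomial (Fin n) ℚ) :
    Ex n s l (fun b => p * φ b + ψ b) = p * Ex n s l φ + Ex n s l ψ := by
  induction l generalizing s φ ψ with
  | nil => rw [Ex, Ex, Ex]
  | cons a l ih =>
    cases a with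
    | zero =>
      have h : Sh n s (fun b => p * φ b + ψ b) = fun b => p * Sh n s φ b + Sh n s ψ b :=
        funext fun b => Sh_lin n s p φ ψ b
      rw [Ex_zero, Ex_zero, Ex_zero, h]
      exact ih (s+1) (Sh n s φ) (Sh n s ψ)
    | succ c =>
      rw [Ex_succ, Ex_succ, Ex_succ]
      exact ih (s+1) (fun b => φ (c :: b)) (fun b => ψ (c :: b))

lemma Xv_supp (s t : ℕ) (h : t ≤ s) : Xv n s ∈ MvPolynomial.supported ℚ {i : Fin n | t ≤ (i : ℕ)} := by
  unfold Xv
  split_ifs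
  · rw [MvPolynomial.X_mem_supported]; exact h
  · exact zero_mem _

lemma Sh_supp (s t : ℕ) (h : t ≤ s) (φ : List ℕ → MvPolynomial (Fin n) ℚ)
    (hφ : ∀ b, φ b ∈ MvPolynomial.supported ℚ {i : Fin n | t ≤ (i : ℕ)}) (b : List ℕ) :
    Sh n s φ b ∈ MvPolynomial.supported ℚ {i : Fin n | t ≤ (i : ℕ)} := by
  induction b with
  | nil => simpa [Sh] using hφ []
  | cons a b ih =>
    cases a with
    | zero => exact sub_mem (hφ _) (mul_mem (Xv_supp n s t h) ih)
    | succ c => exact sub_mem (hφ _) (mul_mem (Xv_supp n s t h) (hφ _))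

lemma Ex_supp (s t : ℕ) (h : t ≤ s) (l : List ℕ) (φ : List ℕ → MvPolynomial (Fin n) ℚ)
    (hφ : ∀ b, φ b ∈ MvPolynomial.supported ℚ {i : Fin n | t ≤ (i : ℕ)}) :
    Ex n s l φ ∈ MvPolynomial.supported ℚ {i : Fin n | t ≤ (i : ℕ)} := by
  induction l generalizing s φ with
  | nil => simpa [Ex] using hφ []
  | cons a b ih =>
    cases a with
    | zero => exact ih _ (by omega) _ (Sh_supp n s t h φ hφ)
    | succ c => exact ih _ (by omega) _ (fun b => hφ _)

def Tr (e : ℕ) (l : List ℕ) : Prop := ∃ k : ℕ, 0 < k ∧ k + e ≤ (l.take k).sum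

lemma Tr_cons (e a : ℕ) (l : List ℕ) : Tr e (a :: l) ↔ e + 1 ≤ a ∨ Tr (e + 1 - a) l := by
  constructor
  · rintro ⟨k, h1, h2⟩
    obtain ⟨k, rfl⟩ : ∃ i', k = i' + 1 := ⟨k-1, by omega⟩
    simp at h2
    by_cases h : e + 1 ≤ a
    · exact Or.inl h
    · right
      refine ⟨k, ?_, by omega⟩
      rcases Nat.eq_zero_or_pos k with rfl | h
      · simp at h2; omega
      · exact h
  · rintro (h | ⟨k, h1, h2⟩)
    · exact ⟨1, by simp, by simp; omega⟩
    · exact ⟨k+1, by omega, by simp; omega⟩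

lemma Tr_nil (e : ℕ) : ¬ Tr e [] := by
  rintro ⟨k, h1, h2⟩; simp at h2; omega

lemma Tr_mono {e e' : ℕ} (h : e ≤ e') {l : List ℕ} : Tr e' l → Tr e l := by
  rintro ⟨k, h1, h2⟩; exact ⟨k, h1, by omega⟩

lemma Sh_mem (J : Ideal (MvPolynomial (Fin n) ℚ)) (s e : ℕ) (φ : List ℕ → MvPolynomial (Fin n) ℚ)
    (hφ : ∀ b : List ℕ, Tr e (b.map Nat.succ) → φ b ∈ J) (b : List ℕ) (hb : Tr (e+1) (b.map Nat.succ)) :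
    Sh n s φ b ∈ J := by
  induction b with
  | nil => exact absurd hb (Tr_nil _)
  | cons a b ih =>
    have h0 := hφ _ (Tr_mono (Nat.le_succ e) hb)
    rw [List.map_cons, Tr_cons] at hb
    cases a with
    | zero =>
      refine sub_mem h0 (J.mul_mem_left _ (ih ?_))
      rcases hb with h | h
      · simp at h
      · simpa using h
    | succ c =>
      refine sub_mem h0 (J.mul_mem_left _ (hφ _ ?_))
      rw [List.map_cons, Tr_cons]
      rcases hb with h | h
      · left; simp only [Nat.succ_eq_add_one] at *; omega
      · right; convert h using 1; simp only [Nat.succ_eq_add_one] at *; omega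

lemma Ex_mem (J : Ideal (MvPolynomial (Fin n) ℚ)) (s e : ℕ) (l : List ℕ) (φ : List ℕ → MvPolynomial (Fin n) ℚ)
    (hφ : ∀ b : List ℕ, Tr e (b.map Nat.succ) → φ b ∈ J) (hl : Tr e l) :
    Ex n s l φ ∈ J := by
  induction l generalizing s e φ with
  | nil => exact absurd hl (Tr_nil _)
  | cons a l ih =>
    rw [Tr_cons] at hl
    cases a with
    | zero =>
      rcases hl with h | h
      · omega
      · exact ih _ (e+1) _ (Sh_mem n J s e φ hφ) h
    | succ a =>
      rcases hl with h | h
      · have hall : ∀ b : List ℕ, φ (a :: b) ∈ J := fun b => hφ _ (by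
          rw [List.map_cons, Tr_cons]; left; exact h)
        have gen : ∀ (l : List ℕ) (s : ℕ) (φ : List ℕ → MvPolynomial (Fin n) ℚ), (∀ b, φ b ∈ J) → Ex n s l φ ∈ J := by
          intro l
          induction l with
          | nil => intro s φ h; exact h _
          | cons a l ih =>
            intro s φ h
            cases a with
            | succ a => exact ih _ _ (fun b => h _)
            | zero =>
              refine ih _ _ (fun b => ?_)
              induction b with
              | nil => exact h _
              | cons a b ih =>
                cases a with
                | zero => exact sub_mem (h _) (J.mul_mem_left _ ih)
                | succ a => exact sub_mem (h _) (J.mul_mem_left _ (h _))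
        exact gen l (s+1) _ hall
      · refine ih _ _ _ (fun b hb => hφ _ ?_) h
        rw [List.map_cons, Tr_cons]; right; exact hb

end RD
namespace RD
variable (n : ℕ)

noncomputable def expo (s : ℕ) (l : List ℕ) : Fin n →₀ ℕ :=
  Finsupp.equivFunOnFinite.symm (fun i => if s ≤ (i : ℕ) then l.getD (i - s) 0 else 0)

lemma expo_apply (s : ℕ) (l : List ℕ) (i : Fin n) :
    expo n s l i = if s ≤ (i : ℕ) then l.getD (i - s) 0 else 0 := rfl

lemma expo_nil (s : ℕ) : expo n s [] = 0 := by
  ext i; simp [expo_apply]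

lemma expo_zero (s : ℕ) (l : List ℕ) : expo n s (0 :: l) = expo n (s+1) l := by
  ext i
  rw [expo_apply, expo_apply]
  by_cases h : s + 1 ≤ (i : ℕ)
  · rw [if_pos h, if_pos (by omega), show (i : ℕ) - s = (i - (s+1)) + 1 by omega, List.getD_cons_succ]
  · rw [if_neg h]
    split_ifs with h2
    · rw [show (i : ℕ) - s = 0 by omega, List.getD_cons_zero]
    · rfl

lemma expo_succ (s a : ℕ) (h : s < n) (l : List ℕ) :
    expo n s ((a+1) :: l) = Finsupp.single ⟨s, h⟩ 1 + expo n s (a :: l) := by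
  ext i
  rw [Finsupp.add_apply, expo_apply, expo_apply]
  by_cases h1 : (i : ℕ) = s
  · have : i = ⟨s, h⟩ := Fin.ext h1
    subst this
    simp; omega
  · have : (⟨s, h⟩ : Fin n) ≠ i := fun hh => h1 (by rw [← hh])
    rw [Finsupp.single_eq_of_ne' this, zero_add]
    split_ifs with h2
    · rw [show (i : ℕ) - s = (i - (s+1)) + 1 by omega, List.getD_cons_succ, List.getD_cons_succ]
    · rfl

lemma expo_ofFn (μ : Fin n →₀ ℕ) : expo n 0 (List.ofFn μ) = μ := by
  ext i
  rw [expo_apply]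
  simp

noncomputable def Lw (μ : Fin n →₀ ℕ) : Submodule ℚ (MvPolynomial (Fin n) ℚ) :=
  MvPolynomial.restrictSupport ℚ {ν | toLex ν < toLex μ}

lemma Lw_mul (μ : Fin n →₀ ℕ) (i : Fin n) (p : MvPolynomial (Fin n) ℚ) (hp : p ∈ Lw n μ) :
    MvPolynomial.X i * p ∈ Lw n (Finsupp.single i 1 + μ) := by
  unfold Lw at *
  rw [MvPolynomial.restrictSupport_eq_span] at hp
  induction hp using Submodule.span_induction with
  | mem x hx =>
    obtain ⟨ν, hν, rfl⟩ := hx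
    simp only [MvPolynomial.X, MvPolynomial.monomial_mul, one_mul]
    rw [MvPolynomial.monomial_mem_restrictSupport]
    left
    exact add_lt_add_right (α := Lex (Fin n →₀ ℕ)) hν (toLex (Finsupp.single i 1))
  | zero => rw [mul_zero]; exact zero_mem _
  | add x y _ _ hx hy => rw [mul_add]; exact add_mem hx hy
  | smul a x _ hx => rw [mul_smul_comm]; exact Submodule.smul_mem _ _ hx

lemma supp_Lw (s a : ℕ) (h : s < n) (l : List ℕ) (p : MvPolynomial (Fin n) ℚ)
    (hp : p ∈ MvPolynomial.supported ℚ {i : Fin n | s + 1 ≤ (i : ℕ)}) :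
    p ∈ Lw n (expo n s ((a+1) :: l)) := by
  rw [MvPolynomial.mem_supported] at hp
  unfold Lw
  rw [MvPolynomial.mem_restrictSupport_iff]
  intro ν hν
  have hz : ∀ i : Fin n, (i : ℕ) ≤ s → ν i = 0 := by
    intro i hi
    by_contra hne
    have := hp ((MvPolynomial.mem_vars_iff_mem_support i).2 ⟨ν, hν, Finsupp.mem_support_iff.2 hne⟩)
    simp at this
    omega
  show toLex ν < toLex _
  rw [Finsupp.Lex.lt_iff]
  refine ⟨⟨s, h⟩, ?_, ?_⟩
  · intro j hj
    have hj' : (j : ℕ) < s := hj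
    show ν j = expo n s ((a+1) :: l) j
    rw [hz j hj'.le, expo_apply, if_neg (by omega)]
  · show ν _ < expo n s ((a+1) :: l) _
    rw [hz _ le_rfl, expo_apply]
    simp

lemma lead (s : ℕ) (l : List ℕ) (hl : s + l.length = n) :
    Ex n s l (F n s) - MvPolynomial.monomial (expo n s l) 1 ∈ Lw n (expo n s l) := by
  induction l generalizing s with
  | nil =>
    rw [Ex, F_nil, expo_nil, MvPolynomial.monomial_zero', MvPolynomial.C_1, sub_self]
    exact zero_mem _
  | cons a l ih =>
    have hs : s < n := by simp at hl; omega
    have h1 : Ex n s (0 :: l) (F n s) - MvPolynomial.monomial (expo n s (0 :: l)) 1 ∈ Lw n (expo n s (0 :: l)) := by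
      have : Sh n s (F n s) = F n (s+1) := funext (Sh_F n s)
      rw [Ex_zero, this, expo_zero]
      exact ih (s+1) (by simp at hl; omega)
    induction a with
    | zero => exact h1
    | succ a ih2 =>
      have h2 := ih2 (by simpa using hl)
      have key : Ex n s ((a+1) :: l) (F n s) = Xv n s * Ex n s (a :: l) (F n s)
          + Ex n (s+1) l (fun b => F n (s+1) (a :: b)) := by
        rw [Ex_succ]
        cases a with
        | zero =>
          have : Sh n s (F n s) = F n (s+1) := funext (Sh_F n s)
          rw [Ex_zero, this, ← Ex_lin]
          congr 1; funext b; exact F_zero n s b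
        | succ a =>
          rw [Ex_succ, ← Ex_lin]
          congr 1; funext b; exact F_succ n s a b
      have hL : Ex n (s+1) l (fun b => F n (s+1) (a :: b)) ∈ Lw n (expo n s ((a+1) :: l)) :=
        supp_Lw n s a hs l _ (Ex_supp n _ _ le_rfl _ _ (fun b => F_supp n _ _))
      have h3 := Lw_mul n _ ⟨s, hs⟩ _ h2
      rw [← expo_succ] at h3
      have hm : (MvPolynomial.monomial (expo n s ((a+1) :: l)) 1 : MvPolynomial (Fin n) ℚ)
          = MvPolynomial.X ⟨s, hs⟩ * MvPolynomial.monomial (expo n s (a :: l)) 1 := by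
        rw [expo_succ n s a hs, MvPolynomial.X, MvPolynomial.monomial_mul, one_mul]
      have hX : Xv n s = MvPolynomial.X ⟨s, hs⟩ := by simp [Xv, hs]
      have := add_mem h3 hL
      rw [key, hm, hX]
      convert this using 1
      ring

lemma gen_mem (e : ℕ) (b : List ℕ) (hb : Tr e (b.map Nat.succ)) : F n 0 b ∈ Jne n e := by
  refine Ideal.subset_span ⟨b.map Nat.succ, ?_, hb, F_eq n b⟩
  intro x hx
  obtain ⟨y, _, rfl⟩ := List.mem_map.1 hx
  exact Nat.succ_pos y

lemma mono_span (e : ℕ) (μ : Fin n →₀ ℕ) :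
    (Ideal.Quotient.mkₐ ℚ (Jne n e)) (MvPolynomial.monomial μ 1) ∈ Submodule.span ℚ
      (Set.range fun ν : {ν : Fin n →₀ ℕ // ¬ Tr e (List.ofFn ν)} =>
        (Ideal.Quotient.mkₐ ℚ (Jne n e)) (MvPolynomial.monomial ν.1 1)) := by
  have wf : WellFoundedLT (Lex (Fin n →₀ ℕ)) := Finsupp.Lex.wellFoundedLT_of_finite
  suffices H : ∀ x : Lex (Fin n →₀ ℕ), (Ideal.Quotient.mkₐ ℚ (Jne n e)) (MvPolynomial.monomial (ofLex x) 1) ∈ Submodule.span ℚ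
      (Set.range fun ν : {ν : Fin n →₀ ℕ // ¬ Tr e (List.ofFn ν)} =>
        (Ideal.Quotient.mkₐ ℚ (Jne n e)) (MvPolynomial.monomial ν.1 1)) from H (toLex μ)
  intro x
  induction x using WellFoundedLT.induction with
  | ind x ih =>
    by_cases hT : Tr e (List.ofFn (ofLex x : Fin n →₀ ℕ))
    · have h1 := lead n 0 (List.ofFn (ofLex x : Fin n →₀ ℕ)) (by simp)
      have h2 := Ex_mem n (Jne n e) 0 e _ (F n 0) (gen_mem n e) hT
      rw [expo_ofFn] at h1
      have h3 : (Ideal.Quotient.mkₐ ℚ (Jne n e)) (Ex n 0 (List.ofFn (ofLex x : Fin n →₀ ℕ)) (F n 0)) = 0 :=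
        Ideal.Quotient.eq_zero_iff_mem.2 h2
      have h4 : ∀ p ∈ Lw n (ofLex x), (Ideal.Quotient.mkₐ ℚ (Jne n e)) p ∈ Submodule.span ℚ
          (Set.range fun ν : {ν : Fin n →₀ ℕ // ¬ Tr e (List.ofFn ν)} =>
            (Ideal.Quotient.mkₐ ℚ (Jne n e)) (MvPolynomial.monomial ν.1 1)) := by
        intro p hp
        unfold Lw at hp
        rw [MvPolynomial.restrictSupport_eq_span] at hp
        induction hp using Submodule.span_induction with
        | mem x hx =>
          obtain ⟨ν, hν, rfl⟩ := hx
          exact ih (toLex ν) hν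
        | zero => rw [map_zero]; exact zero_mem _
        | add x y _ _ hx hy => rw [map_add]; exact add_mem hx hy
        | smul a x _ hx => rw [map_smul]; exact Submodule.smul_mem _ _ hx
      have h5 := h4 _ h1
      rw [map_sub, h3, zero_sub] at h5
      exact neg_mem_iff.1 h5
    · exact Submodule.subset_span ⟨⟨ofLex x, hT⟩, rfl⟩

lemma top_span (e : ℕ) : Submodule.span ℚ
      (Set.range fun ν : {ν : Fin n →₀ ℕ // ¬ Tr e (List.ofFn ν)} =>
        (Ideal.Quotient.mkₐ ℚ (Jne n e)) (MvPolynomial.monomial ν.1 1)) = ⊤ := by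
  rw [eq_top_iff]
  rintro y -
  obtain ⟨p, rfl⟩ := Ideal.Quotient.mkₐ_surjective ℚ (Jne n e) y
  induction p using MvPolynomial.induction_on' with
  | monomial u a =>
    have : MvPolynomial.monomial u a = a • (MvPolynomial.monomial u 1 : MvPolynomial (Fin n) ℚ) := by
      rw [MvPolynomial.smul_monomial, smul_eq_mul, mul_one]
    rw [this, map_smul]
    exact Submodule.smul_mem _ _ (mono_span n e u)
  | add p q hp hq => rw [map_add]; exact add_mem hp hq

def ps (μ : Fin n →₀ ℕ) (k : ℕ) : ℕ := ((List.ofFn μ).take k).sum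

lemma ps_succ (μ : Fin n →₀ ℕ) (i : Fin n) : ps n μ (i+1) = ps n μ i + μ i := by
  unfold ps
  rw [List.sum_take_succ _ _ (by simp)]
  simp

lemma ps_mono (μ : Fin n →₀ ℕ) : Monotone (ps n μ) := by
  refine monotone_nat_of_le_succ fun k => ?_
  by_cases h : k < n
  · have := ps_succ n μ ⟨k, h⟩; simp at this; omega
  · unfold ps
    rw [List.take_of_length_le (by simp; omega), List.take_of_length_le (by simp; omega)]

def pp (μ : Fin n →₀ ℕ) (j : Fin n) : ℕ := ps n μ (j + 1) + j

lemma pp_strictMono (μ : Fin n →₀ ℕ) : StrictMono (pp n μ) := by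
  intro i j h
  have h' : (i : ℕ) < j := h
  have := ps_mono n μ (show (i : ℕ) + 1 ≤ j + 1 by omega)
  unfold pp
  omega

lemma pp_inj (μ ν : Fin n →₀ ℕ) (h : pp n μ = pp n ν) : μ = ν := by
  have h1 : ∀ k ≤ n, ps n μ k = ps n ν k := by
    intro k hk
    cases k with
    | zero => simp [ps]
    | succ k =>
      have := congrFun h ⟨k, hk⟩
      simp [pp] at this
      exact this
  ext i
  have a1 := ps_succ n μ i
  have a2 := ps_succ n ν i
  have := h1 i i.2.le
  have := h1 (i+1) i.2
  omega

lemma pp_le (e : ℕ) (μ : Fin n →₀ ℕ) (h : ¬ Tr e (List.ofFn μ)) (j : Fin n) : pp n μ j ≤ 2 * j + e := by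
  by_contra hc
  refine h ⟨j+1, by omega, ?_⟩
  unfold pp ps at hc
  omega

noncomputable def path (e : ℕ) (μ : Fin n →₀ ℕ) (i : Fin (2 * n + e)) : Bool :=
  decide (∃ j, pp n μ j = i)

lemma card_lt (e : ℕ) (μ : Fin n →₀ ℕ) (h : ¬ Tr e (List.ofFn μ)) (m : ℕ) :
    (Finset.univ.filter fun i : Fin (2 * n + e) => (i : ℕ) < m ∧ path n e μ i = true).card
      = (Finset.univ.filter fun j : Fin n => pp n μ j < m).card := by
  symm
  refine Finset.card_bij (fun j _ => ⟨pp n μ j, by have := pp_le n e μ h j; omega⟩) ?_ ?_ ?_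
  · intro j hj
    simp at hj
    simp [hj, path]
  · intro a _ b _ hab
    exact (pp_strictMono n μ).injective (by simpa using hab)
  · intro i hi
    simp [path] at hi
    obtain ⟨h1, j, hj⟩ := hi
    exact ⟨j, by simp; omega, Fin.ext hj⟩

lemma card_tot (N m : ℕ) (hm : m ≤ N) (f : Fin N → Bool) :
    (Finset.univ.filter fun i : Fin N => (i : ℕ) < m ∧ f i = false).card +
    (Finset.univ.filter fun i : Fin N => (i : ℕ) < m ∧ f i = true).card = m := by
  rw [← Finset.card_union_of_disjoint]
  · have : (Finset.univ.filter fun i : Fin N => (i : ℕ) < m ∧ f i = false) ∪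
      (Finset.univ.filter fun i : Fin N => (i : ℕ) < m ∧ f i = true) =
      Finset.univ.filter fun i : Fin N => (i : ℕ) < m := by
      ext i
      cases h : f i <;> simp [h]
    rw [this, Fin.card_filter_val_lt]
    omega
  · rw [Finset.disjoint_left]
    intro i h1 h2
    simp at h1 h2
    simp [h1] at h2

lemma path_ok (e : ℕ) (μ : Fin n →₀ ℕ) (h : ¬ Tr e (List.ofFn μ)) :
    (Finset.univ.filter fun i => path n e μ i = true).card = n ∧
        ∀ m, m ≤ 2 * n + e →
          (Finset.univ.filter fun i : Fin (2 * n + e) => (i : ℕ) < m ∧ path n e μ i = false).card ≤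
          (Finset.univ.filter fun i : Fin (2 * n + e) => (i : ℕ) < m ∧ path n e μ i = true).card
            + e := by
  constructor
  · have := card_lt n e μ h (2 * n + e)
    have h2 : (Finset.univ.filter fun j : Fin n => pp n μ j < 2 * n + e) = Finset.univ := by
      refine Finset.filter_true_of_mem fun j _ => ?_
      have := pp_le n e μ h j; omega
    rw [h2] at this
    simpa using this
  · intro m hm
    have h1 := card_tot _ m hm (path n e μ)
    rw [card_lt n e μ h] at *
    set t := (Finset.univ.filter fun j : Fin n => pp n μ j < m).card with ht
    suffices m ≤ 2 * t + e by omega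
    by_cases htn : t < n
    · by_contra hc
      have h3 := pp_le n e μ h ⟨t, htn⟩
      simp at h3
      have : (Finset.univ.filter fun j : Fin n => (j : ℕ) < t + 1) ⊆ (Finset.univ.filter fun j : Fin n => pp n μ j < m) := by
        intro j hj
        simp at hj ⊢
        have : pp n μ j ≤ pp n μ ⟨t, htn⟩ := (pp_strictMono n μ).monotone (by rw [Fin.le_def]; simp; omega)
        omega
      have := Finset.card_le_card this
      rw [Fin.card_filter_val_lt] at this
      omega
    · omega

lemma path_inj (e : ℕ) (μ ν : Fin n →₀ ℕ) (h : ¬ Tr e (List.ofFn μ)) (h' : ¬ Tr e (List.ofFn ν))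
    (hp : path n e μ = path n e ν) : μ = ν := by
  apply pp_inj
  rw [← (pp_strictMono n μ).range_inj (pp_strictMono n ν)]
  have key : ∀ (a b : Fin n →₀ ℕ), ¬ Tr e (List.ofFn a) → path n e a = path n e b →
      Set.range (pp n a) ⊆ Set.range (pp n b) := by
    rintro a b ha hab _ ⟨j, rfl⟩
    have := congrFun hab ⟨pp n a j, by have := pp_le n e a ha j; omega⟩
    simp only [path, decide_eq_decide] at this
    exact this.1 ⟨j, rfl⟩
  exact Set.Subset.antisymm (key _ _ h hp) (key _ _ h' hp.symm)

end RD
/-- For every `e ≥ 0` and `n ≥ 1`, `dim_ℚ R_n^(e) ≤ C_n^(e)`, where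
`R_n^(e) = ℚ[x₁,…,x_n]/J_n^(e)` and `C_n^(e)` is the number of lattice paths from
`(0,0)` to `(n+e,n)` with unit east/north steps staying weakly above the line
`y = x - e` (paths encoded as Boolean sequences: `true` = north, `false` = east, with
`n` north steps and every prefix satisfying `#east ≤ #north + e`). -/
theorem Rne_dim_le (n e : ℕ) (hn : 1 ≤ n) :
    Module.rank ℚ (MvPolynomial (Fin n) ℚ ⧸ Jne n e) ≤
      (Nat.card {f : Fin (2 * n + e) → Bool //
        (Finset.univ.filter fun i => f i = true).card = n ∧
        ∀ m, m ≤ 2 * n + e →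
          (Finset.univ.filter fun i : Fin (2 * n + e) => (i : ℕ) < m ∧ f i = false).card ≤
          (Finset.univ.filter fun i : Fin (2 * n + e) => (i : ℕ) < m ∧ f i = true).card
            + e} : Cardinal) := by
  set S := {f : Fin (2 * n + e) → Bool //
        (Finset.univ.filter fun i => f i = true).card = n ∧
        ∀ m, m ≤ 2 * n + e →
          (Finset.univ.filter fun i : Fin (2 * n + e) => (i : ℕ) < m ∧ f i = false).card ≤
          (Finset.univ.filter fun i : Fin (2 * n + e) => (i : ℕ) < m ∧ f i = true).card
            + e} with hS
  let g : {ν : Fin n →₀ ℕ // ¬ RD.Tr e (List.ofFn ν)} → S :=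
    fun ν => ⟨RD.path n e ν.1, RD.path_ok n e ν.1 ν.2⟩
  have hg : Function.Injective g := by
    intro a b hab
    exact Subtype.ext (RD.path_inj n e a.1 b.1 a.2 b.2 (congrArg Subtype.val hab))
  have h1 : Module.rank ℚ (MvPolynomial (Fin n) ℚ ⧸ Jne n e) ≤
      Cardinal.mk {ν : Fin n →₀ ℕ // ¬ RD.Tr e (List.ofFn ν)} := by
    rw [← rank_top, ← RD.top_span n e]
    exact (rank_span_le _).trans Cardinal.mk_range_le
  refine h1.trans ((Cardinal.mk_le_of_injective hg).trans ?_)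
  rw [Nat.cast_card]
end
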